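/- Let p be an odd prime and k an odd prime with k | (p+1). The number of subgroups of order k in PSL_2(F_p) is (p² − p)/2. -/

import Mathlib

/-- `PSL₂(𝔽ₚ)`, the quotient of `SL₂(𝔽ₚ)` by its center `{±I₂}`. -/
abbrev PSL (p : ℕ) :=
  Matrix.SpecialLinearGroup (Fin 2) (ZMod p) ⧸
    Subgroup.center (Matrix.SpecialLinearGroup (Fin 2) (ZMod p))

/-!
Let `K` be a field with `q` elements. The center of `SL₂(K)` has order dividing `2`, so by
Schur–Zassenhaus the subgroups of odd order `k` of `PSL₂(K)` and of `SL₂(K)` correspond, and it is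
enough to count them in `SL₂(K)`. As `k` divides `q + 1`, it is coprime to `q (q - 1)`, and so an
element `A` of order `k` has no eigenvalue in `K`. Then the centralizer `K[A]` of `A` is a field.
If `t` is the trace of `A`, the matrices of trace `t` in `SL₂(K)` all have order `k`, there are
`q (q - 1)` of them, and only `A` and `A⁻¹` lie in `K[A]`. Over an algebraic closure the eigenvalues
of an element of order `k` are `ζ` and `ζ⁻¹` with `ζ` a primitive `k`-th root of unity, so every
subgroup of order `k` contains an element of trace `t`. Hence `A ↦ ⟨A⟩` is a two-to-one map from the
matrices of trace `t` onto the subgroups of order `k`.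
-/

section CoprimeQuotient

variable {G : Type*} [Group G] {N : Subgroup G} [N.Normal]

theorem card_map_mk'_of_coprime {H : Subgroup G} (h : (Nat.card N).Coprime (Nat.card H)) :
    Nat.card (H.map (QuotientGroup.mk' N)) = Nat.card H := by
  rw [← Subgroup.relIndex_ker, QuotientGroup.ker_mk', ← Subgroup.inf_relIndex_right,
    (Subgroup.disjoint_of_coprime_natCard h).eq_bot, Subgroup.relIndex_bot_left]

theorem exists_map_mk'_eq_of_coprime {H : Subgroup (G ⧸ N)} [Finite H]
    (h : (Nat.card N).Coprime (Nat.card H)) :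
    ∃ H' : Subgroup G, Nat.card H' = Nat.card H ∧ H'.map (QuotientGroup.mk' N) = H := by
  set P := H.comap (QuotientGroup.mk' N)
  have hcard : Nat.card (N.subgroupOf P) = Nat.card N :=
    Nat.card_congr (Subgroup.subgroupOfEquivOfLe (QuotientGroup.le_comap_mk' N H)).toEquiv
  have hindex : (N.subgroupOf P).index = Nat.card H := by
    have hker := P.relIndex_ker (QuotientGroup.mk' N)
    rwa [QuotientGroup.ker_mk',
      Subgroup.map_comap_eq_self_of_surjective (QuotientGroup.mk'_surjective N)] at hker
  obtain ⟨C, hC⟩ := Subgroup.exists_left_complement'_of_coprime (hcard ▸ hindex ▸ h)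
  have hCcard : Nat.card (C.map P.subtype) = Nat.card H := by
    rw [Subgroup.card_map_of_injective P.subtype_injective, ← hC.index_eq_card, hindex]
  refine ⟨C.map P.subtype, hCcard, Subgroup.eq_of_le_of_card_ge ?_ ?_⟩
  · exact (Subgroup.map_mono (Subgroup.map_subtype_le C)).trans (Subgroup.map_comap_le _ H)
  · rw [card_map_mk'_of_coprime (hCcard ▸ h), hCcard]

theorem le_of_map_mk'_le (hN : N ≤ Subgroup.center G) {H H' : Subgroup G}
    (h : (Nat.card N).Coprime (Nat.card H)) (hdvd : Nat.card H' ∣ Nat.card H)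
    (hle : H'.map (QuotientGroup.mk' N) ≤ H.map (QuotientGroup.mk' N)) : H' ≤ H := by
  intro g hg
  obtain ⟨x, hx, hxg⟩ := Subgroup.mem_map.1 (hle (Subgroup.mem_map_of_mem _ hg))
  obtain ⟨z, hz, rfl⟩ := (QuotientGroup.mk'_eq_mk' N).1 hxg
  have hxz : Commute x z := Subgroup.mem_center_iff.1 (hN hz) x
  have hx1 : x ^ Nat.card H = 1 := orderOf_dvd_iff_pow_eq_one.1 (H.orderOf_dvd_natCard hx)
  have hxz1 : (x * z) ^ Nat.card H = 1 :=
    orderOf_dvd_iff_pow_eq_one.1 ((H'.orderOf_dvd_natCard hg).trans hdvd)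
  have hz1 : z ^ Nat.card H = 1 := by rwa [hxz.mul_pow, hx1, one_mul] at hxz1
  have hz : z = 1 := orderOf_eq_one_iff.1 <|
    Nat.eq_one_of_dvd_coprimes h (N.orderOf_dvd_natCard hz) (orderOf_dvd_of_pow_eq_one hz1)
  rwa [hz, mul_one]

theorem card_subgroup_quotient_eq (hN : N ≤ Subgroup.center G) {k : ℕ} (hk0 : k ≠ 0)
    (hk : (Nat.card N).Coprime k) :
    Nat.card {H : Subgroup (G ⧸ N) // Nat.card H = k} =
      Nat.card {H : Subgroup G // Nat.card H = k} := by
  let f (H : {H : Subgroup G // Nat.card H = k}) : {H : Subgroup (G ⧸ N) // Nat.card H = k} :=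
    ⟨H.1.map (QuotientGroup.mk' N), (card_map_mk'_of_coprime (H.2.symm ▸ hk)).trans H.2⟩
  refine (Nat.card_eq_of_bijective f ⟨fun H H' h ↦ ?_, fun H ↦ ?_⟩).symm
  · have hmap := congrArg Subtype.val h
    exact Subtype.ext (le_antisymm
      (le_of_map_mk'_le hN (H'.2.symm ▸ hk) (H.2.trans H'.2.symm).dvd hmap.le)
      (le_of_map_mk'_le hN (H.2.symm ▸ hk) (H'.2.trans H.2.symm).dvd hmap.ge))
  · have : Finite H.1 := Nat.finite_of_card_ne_zero (H.2.symm ▸ hk0)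
    obtain ⟨H', hcard, hmap⟩ := exists_map_mk'_eq_of_coprime (H.2.symm ▸ hk)
    exact ⟨⟨H', hcard.trans H.2⟩, Subtype.ext hmap⟩

end CoprimeQuotient

theorem ne_inv_of_odd_orderOf {G : Type*} [Group G] {g : G} (hg : Odd (orderOf g)) (h1 : g ≠ 1) :
    g ≠ g⁻¹ := by
  intro h
  have h2 : orderOf g ∣ 2 :=
    orderOf_dvd_of_pow_eq_one (by rw [pow_two, mul_eq_one_iff_eq_inv, ← h])
  exact h1 <| orderOf_eq_one_iff.1 <|
    Nat.eq_one_of_dvd_coprimes (Nat.coprime_two_right.2 hg) dvd_rfl h2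

theorem card_eq_mul_card_of_card_fiber {α β : Type*} [Finite α] [Finite β] {n : ℕ} (f : α → β)
    (h : ∀ b, Nat.card {a // f a = b} = n) : Nat.card α = n * Nat.card β := by
  have := Fintype.ofFinite β
  rw [← Nat.card_congr (Equiv.sigmaFiberEquiv f), Nat.card_sigma]
  simp [h, mul_comm]

theorem coprime_of_dvd_add_one {k q : ℕ} (h : k ∣ q + 1) : k.Coprime q :=
  Nat.Coprime.coprime_dvd_left h (by simp)

theorem coprime_sub_one_of_dvd_add_one {k q : ℕ} (hk : Odd k) (h : k ∣ q + 1) :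
    k.Coprime (q - 1) := by
  rcases q.eq_zero_or_pos with rfl | hq
  · simpa using h
  have hgcd : k.gcd (q - 1) ∣ 2 := by
    have h2 := Nat.dvd_sub ((Nat.gcd_dvd_left k (q - 1)).trans h) (Nat.gcd_dvd_right k (q - 1))
    rwa [show q + 1 - (q - 1) = 2 by lia] at h2
  exact Nat.eq_one_of_dvd_coprimes (Nat.coprime_two_right.2 hk) (Nat.gcd_dvd_left k _) hgcd

section CommRing

open Matrix Polynomial
open scoped MatrixGroups

variable {R S : Type*} [CommRing R] [CommRing S] [Algebra R S]

theorem add_adjugate_fin_two (A : Matrix (Fin 2) (Fin 2) R) :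
    A + A.adjugate = A.trace • 1 := by
  rw [adjugate_fin_two, trace_fin_two]
  ext i j
  fin_cases i <;> fin_cases j <;> simp [add_comm]

theorem sq_fin_two (A : Matrix (Fin 2) (Fin 2) R) :
    A ^ 2 = A.trace • A - A.det • 1 := by
  rw [← mul_adjugate, eq_sub_iff_add_eq, pow_two, ← mul_add, add_adjugate_fin_two, mul_smul_one]

theorem smul_one_add_smul_fin_two (x y : R) (A : Matrix (Fin 2) (Fin 2) R) :
    x • 1 + y • A = !![x + y * A 0 0, y * A 0 1; y * A 1 0, x + y * A 1 1] := by
  ext i j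
  fin_cases i <;> fin_cases j <;> simp

theorem det_smul_one_add_smul_fin_two (x y : R) (A : Matrix (Fin 2) (Fin 2) R) :
    (x • 1 + y • A).det = x ^ 2 + x * y * A.trace + y ^ 2 * A.det := by
  rw [smul_one_add_smul_fin_two, det_fin_two_of, trace_fin_two, det_fin_two]
  ring

theorem trace_pow_fin_two (A : Matrix (Fin 2) (Fin 2) R) (n : ℕ) :
    (A ^ n).trace = (dickson 1 A.det n).eval A.trace := by
  induction n using Nat.twoStepInduction with
  | zero => rw [pow_zero, trace_one, dickson_zero]; norm_num
  | one => rw [pow_one, dickson_one, eval_X]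
  | more n ih ih' =>
    have hpow : A ^ (n + 2) = A.trace • A ^ (n + 1) - A.det • A ^ n := by
      rw [pow_add, sq_fin_two, mul_sub, mul_smul_comm, mul_smul_one, pow_succ]
    rw [hpow, dickson_add_two]
    simp [ih, ih']

theorem trace_coe_one : (1 : SL(2, R)).1.trace = 2 := by
  rw [Matrix.SpecialLinearGroup.coe_one, trace_one, Fintype.card_fin, Nat.cast_ofNat]

theorem trace_coe_inv (A : SL(2, R)) : (A⁻¹).1.trace = A.1.trace := by
  rw [Matrix.SpecialLinearGroup.coe_inv, adjugate_fin_two, trace_fin_two_of, trace_fin_two,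
    add_comm]

theorem trace_coe_pow (A : SL(2, R)) (n : ℕ) :
    (A ^ n).1.trace = (dickson 1 (1 : R) n).eval A.1.trace := by
  rw [Matrix.SpecialLinearGroup.coe_pow, trace_pow_fin_two, A.det_coe]

theorem algebraMap_trace_coe_pow {A : SL(2, R)} {x y : S} (hxy : x * y = 1)
    (hA : x + y = algebraMap R S A.1.trace) (n : ℕ) :
    x ^ n + y ^ n = algebraMap R S (A ^ n).1.trace := by
  rw [trace_coe_pow, ← dickson_one_one_eval_add_inv x y hxy, hA, ← map_one (algebraMap R S),
    ← map_dickson, eval_map_algebraMap, aeval_algebraMap_apply_eq_algebraMap_eval]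

theorem pow_eq_one_of_add_eq_trace [IsReduced S] {A : SL(2, R)} {x y : S} (hxy : x * y = 1)
    (hA : x + y = algebraMap R S A.1.trace) {n : ℕ} (hn : A ^ n = 1) : x ^ n = 1 := by
  have hsum : x ^ n + y ^ n = 2 := by
    rw [algebraMap_trace_coe_pow hxy hA, hn, trace_coe_one, map_ofNat]
  have hprod : x ^ n * y ^ n = 1 := by rw [← mul_pow, hxy, one_pow]
  have hsq : (x ^ n - 1) ^ 2 = 0 := by linear_combination x ^ n * hsum - hprod
  exact sub_eq_zero.1 (pow_eq_zero_iff two_ne_zero |>.1 hsq)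

/-- `t` is an elliptic trace if `X ^ 2 - t * X + 1` has no root in `R`. Over a field this says that
the matrices of trace `t` in `SL(2, R)` have no eigenvalue. Asking for no factorization
`(X - x) * (X - y)`, rather than for a nonsquare discriminant, covers characteristic two. -/
def IsEllipticTrace (t : R) : Prop :=
  ∀ x y : R, x + y = t → x * y ≠ 1

theorem IsEllipticTrace.ne_two {t : R} (ht : IsEllipticTrace t) : t ≠ 2 := fun h ↦
  ht 1 1 (by rw [h, one_add_one_eq_two]) (one_mul 1)

theorem card_center_SL_dvd (n R : Type*) [Fintype n] [DecidableEq n] [Nonempty n] [CommRing R]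
    [IsDomain R] : Nat.card (Subgroup.center (SpecialLinearGroup n R)) ∣ Fintype.card n := by
  have e := Matrix.SpecialLinearGroup.center_equiv_rootsOfUnity' (R := R) (Classical.arbitrary n)
  rw [Nat.card_congr e.toEquiv, ← IsCyclic.exponent_eq_card]
  exact Monoid.exponent_dvd_of_forall_pow_eq_one fun x ↦ Subtype.ext x.2

end CommRing

section Field

open Matrix Polynomial
open scoped MatrixGroups

variable {K : Type*} [Field K]

theorem exists_eq_smul_one_add_smul_of_commute {A B : Matrix (Fin 2) (Fin 2) K} (hA : A 1 0 ≠ 0)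
    (h : Commute A B) : ∃ x y : K, B = x • 1 + y • A := by
  have h00 := congrFun (congrFun h.eq 0) 0
  have h10 := congrFun (congrFun h.eq 1) 0
  simp only [mul_apply, Fin.sum_univ_two] at h00 h10
  obtain ⟨y, hy⟩ : ∃ y, y * A 1 0 = B 1 0 := ⟨B 1 0 / A 1 0, div_mul_cancel₀ _ hA⟩
  have h01 : y * A 0 1 = B 0 1 := mul_right_cancel₀ hA (by linear_combination A 0 1 * hy + h00)
  have h11 : B 0 0 - y * A 0 0 + y * A 1 1 = B 1 1 :=
    mul_right_cancel₀ hA (by linear_combination (A 1 1 - A 0 0) * hy + h10)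
  refine ⟨B 0 0 - y * A 0 0, y, ?_⟩
  rw [smul_one_add_smul_fin_two, sub_add_cancel, hy, h01, h11, ← eta_fin_two]

theorem IsEllipticTrace.apply_mul_apply_ne_zero {A : SL(2, K)} (hA : IsEllipticTrace A.1.trace) :
    A.1 0 1 * A.1 1 0 ≠ 0 := by
  intro h
  apply hA _ _ (trace_fin_two A.1).symm
  rw [← sub_zero (A.1 0 0 * A.1 1 1), ← h, ← det_fin_two, A.det_coe]

theorem IsEllipticTrace.eq_zero_of_commute_of_det_eq_zero {A : SL(2, K)}
    (hA : IsEllipticTrace A.1.trace) {B : Matrix (Fin 2) (Fin 2) K} (h : Commute A.1 B)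
    (hB : B.det = 0) : B = 0 := by
  obtain ⟨x, y, rfl⟩ :=
    exists_eq_smul_one_add_smul_of_commute (right_ne_zero_of_mul hA.apply_mul_apply_ne_zero) h
  rw [det_smul_one_add_smul_fin_two, A.det_coe] at hB
  obtain rfl : y = 0 := by
    by_contra hy
    apply hA (-x / y) (A.1.trace + x / y) (by ring)
    field_simp
    linear_combination -hB
  obtain rfl : x = 0 := by simpa using hB
  simp

theorem IsEllipticTrace.eq_or_eq_inv_of_commute {A B : SL(2, K)} (hA : IsEllipticTrace A.1.trace)
    (htr : B.1.trace = A.1.trace) (h : Commute A B) : B = A ∨ B = A⁻¹ := by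
  have hAB : Commute A.1 B.1 := congrArg Subtype.val h.eq
  have hAinv : Commute A.1 (A⁻¹).1 := congrArg Subtype.val (Commute.refl A).inv_right.eq
  have hmul : (B.1 - A.1) * (B.1 - (A⁻¹).1) = 0 := by
    calc (B.1 - A.1) * (B.1 - (A⁻¹).1)
        = B.1 ^ 2 - (A.1 * B.1 + B.1 * (A⁻¹).1) + A.1 * (A⁻¹).1 := by noncomm_ring
      _ = B.1 ^ 2 - B.1.trace • B.1 + 1 := by
        rw [hAB.eq, ← mul_add, Matrix.SpecialLinearGroup.coe_inv, add_adjugate_fin_two,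
          mul_smul_one, htr, mul_adjugate, A.det_coe, one_smul]
      _ = 0 := by rw [sq_fin_two, B.det_coe, one_smul]; abel
  have hdet : (B.1 - A.1).det * (B.1 - (A⁻¹).1).det = 0 := by rw [← det_mul, hmul, det_zero]
  refine (mul_eq_zero.1 hdet).imp (fun h ↦ ?_) fun h ↦ ?_ <;>
    refine Subtype.ext (sub_eq_zero.1 (hA.eq_zero_of_commute_of_det_eq_zero ?_ h))
  · exact hAB.sub_right (Commute.refl _)
  · exact hAB.sub_right hAinv

theorem IsEllipticTrace.zpowers_eq_zpowers_iff {A B : SL(2, K)} (hA : IsEllipticTrace A.1.trace)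
    (htr : B.1.trace = A.1.trace) :
    Subgroup.zpowers B = Subgroup.zpowers A ↔ B = A ∨ B = A⁻¹ := by
  constructor
  · intro h
    obtain ⟨j, rfl⟩ := Subgroup.mem_zpowers_iff.1 (h ▸ Subgroup.mem_zpowers B)
    exact hA.eq_or_eq_inv_of_commute htr (Commute.self_zpow A j)
  · rintro (rfl | rfl)
    exacts [rfl, Subgroup.zpowers_inv]

theorem IsEllipticTrace.pow_eq_one_of_trace_eq {A B : SL(2, K)} (hA : IsEllipticTrace A.1.trace)
    (htr : A.1.trace = B.1.trace) {n : ℕ} (hB : B ^ n = 1) : A ^ n = 1 := by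
  have htr' : (A ^ n).1.trace = 2 := by
    rw [trace_coe_pow, htr, ← trace_coe_pow, hB, trace_coe_one]
  have hcomm : Commute A.1 (A.1 ^ n - 1) := (Commute.self_pow A.1 n).sub_right (Commute.one_right _)
  have hdet : (A.1 ^ n - 1).det = 0 := by
    have h := det_smul_one_add_smul_fin_two (-1) 1 (A ^ n).1
    rw [htr', (A ^ n).det_coe, Matrix.SpecialLinearGroup.coe_pow] at h
    rw [sub_eq_neg_add, ← one_smul K (A.1 ^ n), ← neg_one_smul K (1 : Matrix (Fin 2) (Fin 2) K), h]
    norm_num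
  exact Subtype.ext (sub_eq_zero.1 (hA.eq_zero_of_commute_of_det_eq_zero hcomm hdet))

theorem IsEllipticTrace.orderOf_eq_of_trace_eq {A B : SL(2, K)} (hA : IsEllipticTrace A.1.trace)
    (htr : A.1.trace = B.1.trace) : orderOf A = orderOf B := by
  have hB : IsEllipticTrace B.1.trace := htr ▸ hA
  exact Nat.dvd_antisymm
    (orderOf_dvd_of_pow_eq_one (hA.pow_eq_one_of_trace_eq htr (pow_orderOf_eq_one B)))
    (orderOf_dvd_of_pow_eq_one (hB.pow_eq_one_of_trace_eq htr.symm (pow_orderOf_eq_one A)))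

theorem IsEllipticTrace.card_trace_eq {t : K} (ht : IsEllipticTrace t) :
    Nat.card {A : SL(2, K) // A.1.trace = t} = Nat.card K * (Nat.card K - 1) := by
  have hb (A : {A : SL(2, K) // A.1.trace = t}) : A.1.1 0 1 ≠ 0 :=
    left_ne_zero_of_mul (IsEllipticTrace.apply_mul_apply_ne_zero (A.2.symm ▸ ht))
  let e (A : {A : SL(2, K) // A.1.trace = t}) : K × Kˣ := (A.1.1 0 0, Units.mk0 (A.1.1 0 1) (hb A))
  have he : e.Bijective := by
    constructor
    · intro A B hAB
      obtain ⟨h00, h01⟩ := Prod.mk.injEq .. ▸ hAB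
      replace h01 : A.1.1 0 1 = B.1.1 0 1 := congrArg Units.val h01
      have h11 : A.1.1 1 1 = B.1.1 1 1 := by
        have h := A.2.trans B.2.symm
        rw [trace_fin_two, trace_fin_two, h00] at h
        exact add_left_cancel h
      have h10 : A.1.1 1 0 = B.1.1 1 0 := by
        have h := A.1.det_coe.trans B.1.det_coe.symm
        rw [det_fin_two, det_fin_two, h00, h11, h01] at h
        exact mul_left_cancel₀ (hb B) (sub_right_injective h)
      ext i j
      fin_cases i <;> fin_cases j
      exacts [h00, h01, h10, h11]
    · rintro ⟨a, b⟩
      refine ⟨⟨⟨!![a, b; (a * (t - a) - 1) * (b⁻¹ : Kˣ), t - a], ?_⟩, ?_⟩, ?_⟩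
      · rw [det_fin_two_of, mul_left_comm, Units.mul_inv, mul_one, sub_sub_cancel]
      · rw [trace_fin_two_of, add_sub_cancel]
      · exact Prod.ext rfl (Units.ext rfl)
  rw [Nat.card_eq_of_bijective e he, Nat.card_prod, Nat.card_units]

theorem exists_add_eq_mul_eq {L : Type*} [Field L] [IsAlgClosed L] (s p : L) :
    ∃ x y : L, x + y = s ∧ x * y = p := by
  obtain ⟨x, hx⟩ := IsAlgClosed.exists_root (X ^ 2 - C s * X + C p : L[X])
    (ne_of_eq_of_ne (by compute_degree!) two_ne_zero)
  refine ⟨x, s - x, add_sub_cancel x s, ?_⟩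
  simp only [IsRoot.def, eval_add, eval_sub, eval_mul, eval_pow, eval_X, eval_C] at hx
  linear_combination -hx

theorem exists_isPrimitiveRoot_add_eq_trace (L : Type*) [Field L] [Algebra K L] [IsAlgClosed L]
    {A : SL(2, K)} {k : ℕ} [Fact k.Prime] (hA : A ^ k = 1) (htr : A.1.trace ≠ 2) :
    ∃ x y : L, x * y = 1 ∧ x + y = algebraMap K L A.1.trace ∧ IsPrimitiveRoot x k := by
  obtain ⟨x, y, hsum, hprod⟩ := exists_add_eq_mul_eq (algebraMap K L A.1.trace) 1
  refine ⟨x, y, hprod, hsum, ?_⟩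
  have hx : x ≠ 1 := by
    rintro rfl
    rw [one_mul] at hprod
    rw [hprod, one_add_one_eq_two, ← map_ofNat (algebraMap K L)] at hsum
    exact htr ((algebraMap K L).injective hsum.symm)
  rw [← orderOf_eq_prime (pow_eq_one_of_add_eq_trace hprod hsum hA) hx]
  exact IsPrimitiveRoot.orderOf x

theorem exists_trace_pow_eq_trace {A B : SL(2, K)} {k : ℕ} [Fact k.Prime]
    (hA : A ^ k = 1) (hAtr : A.1.trace ≠ 2) (hB : B ^ k = 1) (hBtr : B.1.trace ≠ 2) :
    ∃ i : ℕ, (A ^ i).1.trace = B.1.trace := by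
  obtain ⟨x, x', hxx', hx, hxk⟩ :=
    exists_isPrimitiveRoot_add_eq_trace (AlgebraicClosure K) hA hAtr
  obtain ⟨y, y', hyy', hy, hyk⟩ :=
    exists_isPrimitiveRoot_add_eq_trace (AlgebraicClosure K) hB hBtr
  have : NeZero k := ⟨(Fact.out : k.Prime).ne_zero⟩
  obtain ⟨i, -, rfl⟩ := hxk.eq_pow_of_pow_eq_one hyk.pow_eq_one
  have hy' : y' = x' ^ i :=
    left_inv_eq_right_inv ((mul_comm _ _).trans hyy') (by rw [← mul_pow, hxx', one_pow])
  refine ⟨i, (algebraMap K (AlgebraicClosure K)).injective ?_⟩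
  rw [← algebraMap_trace_coe_pow hxx' hx, ← hy, hy']

end Field

section FiniteField

open Matrix
open scoped MatrixGroups

variable {K : Type*} [Field K] [Finite K]

theorem pow_card_eq_one_of_trace_eq_two {A : SL(2, K)} (hA : A.1.trace = 2) :
    A ^ Nat.card K = 1 := by
  have hsq : (A.1 - 1) ^ 2 = 0 := by
    rw [(Commute.one_right A.1).sub_sq, sq_fin_two, hA, A.det_coe, one_smul,
      one_pow, mul_one, two_smul, two_mul]
    abel
  have := Fintype.ofFinite K
  obtain ⟨p, hp⟩ := CharP.exists K
  obtain ⟨n, hprime, hcard⟩ := FiniteField.card K p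
  have := Fact.mk hprime
  have hpow : A.1 ^ p ^ (n : ℕ) - 1 = 0 := by
    calc A.1 ^ p ^ (n : ℕ) - 1
        = A.1 ^ p ^ (n : ℕ) - 1 ^ p ^ (n : ℕ) := congrArg _ (one_pow _).symm
      _ = (A.1 - 1) ^ p ^ (n : ℕ) :=
        (sub_pow_char_pow_of_commute p n (Commute.one_right A.1)).symm
      _ = 0 := pow_eq_zero_of_le (hcard ▸ Fintype.one_lt_card) hsq
  rw [Nat.card_eq_fintype_card, hcard]
  exact Subtype.ext (sub_eq_zero.1 hpow)

theorem isEllipticTrace_of_pow_eq_one {A : SL(2, K)} {n : ℕ} (hn : n.Coprime (Nat.card K))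
    (hn' : n.Coprime (Nat.card K - 1)) (hA : A ^ n = 1) (hA1 : A ≠ 1) :
    IsEllipticTrace A.1.trace := by
  intro x y hsum hprod
  have hx : x = 1 := by
    have := Fintype.ofFinite K
    have hxq : x ^ (Nat.card K - 1) = 1 := by
      rw [Nat.card_eq_fintype_card]
      exact FiniteField.pow_card_sub_one_eq_one x (left_ne_zero_of_mul_eq_one hprod)
    exact (pow_eq_one_iff_of_coprime hn').1 ⟨pow_eq_one_of_add_eq_trace hprod hsum hA, hxq⟩
  have hy : y = 1 := by rwa [hx, one_mul] at hprod
  have hAq := pow_card_eq_one_of_trace_eq_two (hsum.symm.trans (by rw [hx, hy, one_add_one_eq_two]))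
  exact hA1 ((pow_eq_one_iff_of_coprime hn).1 ⟨hA, hAq⟩)

theorem exists_orderOf_eq_of_dvd_card_add_one {k : ℕ} [Fact k.Prime]
    (hk : k.Coprime (Nat.card K - 1)) (hdvd : k ∣ Nat.card K + 1) :
    ∃ A : SL(2, K), orderOf A = k := by
  have := Fintype.ofFinite K
  have hGL : k ∣ Nat.card (GL (Fin 2) K) := by
    rw [Matrix.card_GL_field, Fin.prod_univ_two, ← Nat.card_eq_fintype_card]
    refine (hdvd.trans (Dvd.intro (Nat.card K - 1) ?_)).mul_right _
    rw [← Nat.sq_sub_sq]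
    simp
  obtain ⟨g, hg⟩ := exists_prime_orderOf_dvd_card' k hGL
  have hdet : GeneralLinearGroup.det g = 1 := by
    refine (pow_eq_one_iff_of_coprime hk).1 ⟨?_, ?_⟩
    · rw [← map_pow, ← hg, pow_orderOf_eq_one, map_one]
    · rw [← Nat.card_units, pow_card_eq_one']
  let A : SL(2, K) := ⟨g.1, congrArg Units.val hdet⟩
  have hAg : A.toGL = g := Units.ext rfl
  exact ⟨A, by rw [← hg, ← hAg, orderOf_injective _ Matrix.SpecialLinearGroup.toGL_injective]⟩

theorem isEllipticTrace_of_orderOf_eq {k : ℕ} [Fact k.Prime] (hk : Odd k)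
    (hdvd : k ∣ Nat.card K + 1) {A : SL(2, K)} (hA : orderOf A = k) :
    IsEllipticTrace A.1.trace := by
  have hA1 : A ≠ 1 := by
    rintro rfl
    exact (Fact.out : k.Prime).ne_one (hA.symm.trans orderOf_one)
  exact isEllipticTrace_of_pow_eq_one (coprime_of_dvd_add_one hdvd)
    (coprime_sub_one_of_dvd_add_one hk hdvd) (hA ▸ pow_orderOf_eq_one A) hA1

theorem exists_zpowers_eq_of_card_eq {k : ℕ} [Fact k.Prime] (hk : Odd k)
    (hdvd : k ∣ Nat.card K + 1) {B : SL(2, K)} (hB : orderOf B = k)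
    {H : Subgroup SL(2, K)} (hH : Nat.card H = k) :
    ∃ A : SL(2, K), A.1.trace = B.1.trace ∧ Subgroup.zpowers A = H := by
  obtain ⟨⟨g, hgH⟩, hg⟩ := exists_prime_orderOf_dvd_card' k hH.symm.dvd
  rw [Subgroup.orderOf_mk] at hg
  have hBell := isEllipticTrace_of_orderOf_eq hk hdvd hB
  obtain ⟨i, hi⟩ := exists_trace_pow_eq_trace (hg ▸ pow_orderOf_eq_one g)
    (isEllipticTrace_of_orderOf_eq hk hdvd hg).ne_two (hB ▸ pow_orderOf_eq_one B) hBell.ne_two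
  have hgi : orderOf (g ^ i) = k :=
    (IsEllipticTrace.orderOf_eq_of_trace_eq (hi ▸ hBell) hi).trans hB
  refine ⟨g ^ i, hi, Subgroup.eq_of_le_of_card_ge ?_ ?_⟩
  · exact Subgroup.zpowers_le.2 (pow_mem hgH i)
  · rw [Nat.card_zpowers, hgi, hH]

theorem two_mul_card_subgroup_SL_two {k : ℕ} [Fact k.Prime] (hk : Odd k)
    (hdvd : k ∣ Nat.card K + 1) :
    2 * Nat.card {H : Subgroup SL(2, K) // Nat.card H = k} = Nat.card K * (Nat.card K - 1) := by
  obtain ⟨B, hB⟩ :=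
    exists_orderOf_eq_of_dvd_card_add_one (coprime_sub_one_of_dvd_add_one hk hdvd) hdvd
  have hBell := isEllipticTrace_of_orderOf_eq hk hdvd hB
  have hord {A : SL(2, K)} (htr : A.1.trace = B.1.trace) : orderOf A = k :=
    (hBell.orderOf_eq_of_trace_eq htr.symm).symm.trans hB
  let f (A : {A : SL(2, K) // A.1.trace = B.1.trace}) :
      {H : Subgroup SL(2, K) // Nat.card H = k} :=
    ⟨Subgroup.zpowers A.1, (Nat.card_zpowers A.1).trans (hord A.2)⟩
  rw [← hBell.card_trace_eq]
  refine (card_eq_mul_card_of_card_fiber f fun H ↦ ?_).symm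
  obtain ⟨A, htr, hA⟩ := exists_zpowers_eq_of_card_eq hk hdvd hB H.2
  have hfib : {C | f C = H} = {⟨A, htr⟩, ⟨A⁻¹, (trace_coe_inv A).trans htr⟩} := by
    ext ⟨C, hC⟩
    simp only [Set.mem_ofPred_eq, Set.mem_insert_iff, Set.mem_singleton_iff, f, Subtype.ext_iff,
      ← hA]
    exact (htr ▸ hBell : IsEllipticTrace A.1.trace).zpowers_eq_zpowers_iff (hC.trans htr.symm)
  have hA1 : A ≠ 1 := by
    rintro rfl
    exact (Fact.out : k.Prime).ne_one ((hord htr).symm.trans orderOf_one)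
  have hne : A ≠ A⁻¹ := ne_inv_of_odd_orderOf ((hord htr).symm ▸ hk) hA1
  calc Nat.card {C // f C = H} = Set.ncard {C | f C = H} := rfl
    _ = 2 := by rw [hfib, Set.ncard_pair (fun h ↦ hne (congrArg Subtype.val h))]

end FiniteField

open scoped MatrixGroups in
theorem stmt13_general {K : Type*} [Field K] [Finite K] {k : ℕ} [Fact k.Prime] (hk : Odd k)
    (hdvd : k ∣ Nat.card K + 1) :
    Nat.card {H : Subgroup (Matrix.ProjectiveSpecialLinearGroup (Fin 2) K) // Nat.card H = k} =
      (Nat.card K ^ 2 - Nat.card K) / 2 := by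
  have hcoprime : (Nat.card (Subgroup.center SL(2, K))).Coprime k :=
    (Nat.coprime_two_left.2 hk).coprime_dvd_left (card_center_SL_dvd (Fin 2) K)
  calc Nat.card {H : Subgroup (Matrix.ProjectiveSpecialLinearGroup (Fin 2) K) // Nat.card H = k}
      = Nat.card {H : Subgroup SL(2, K) // Nat.card H = k} :=
        card_subgroup_quotient_eq le_rfl (Fact.out : k.Prime).ne_zero hcoprime
    _ = (Nat.card K * (Nat.card K - 1)) / 2 := by
      rw [← two_mul_card_subgroup_SL_two hk hdvd, Nat.mul_div_cancel_left _ two_pos]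
    _ = (Nat.card K ^ 2 - Nat.card K) / 2 := by rw [Nat.mul_sub_one, pow_two]

theorem stmt13 (p k : ℕ) [Fact p.Prime] [Fact k.Prime] (hp : Odd p) (hk : Odd k)
    (hdvd : k ∣ p + 1) :
    Nat.card {H : Subgroup (PSL p) // Nat.card H = k} = (p ^ 2 - p) / 2 := by
  simpa only [Nat.card_zmod] using stmt13_general (K := ZMod p) hk (by rwa [Nat.card_zmod])
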